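/- Let 0 < r < ∞ and let κ_r be the unique number in (0,∞) with lim_{k→∞} (1/k) log Σ_{σ∈Ω_k} (μ_h(J_σ) ‖φ'_σ‖^r)^{κ_r/(r+κ_r)} = 0. Then the κ_r-dimensional lower quantization coefficient of order r of μ_h is positive: liminf_{n→∞} n · V_{n,r}(μ_h)^{κ_r/r} > 0. -/

import Mathlib

open MeasureTheory Filter Metric

noncomputable section

/-- A cookie-cutter system on `J = [0,1]`. -/
structure CookieCutter where
  N : ℕ
  hN : 2 ≤ N
  Jsub : Fin N → Set ℝ
  f : ℝ → ℝ
  φ : Fin N → ℝ → ℝ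
  c : ℝ
  γ : ℝ
  b : ℝ
  B : ℝ
  hJsub_sub : ∀ j, Jsub j ⊆ Set.Icc 0 1
  hJsub_interval : ∀ j, ∃ u v : ℝ, u ≤ v ∧ Jsub j = Set.Icc u v
  hJsub_disj : ∀ i j, i ≠ j → Disjoint (Jsub i) (Jsub j)
  hbij : ∀ j, Set.BijOn f (Jsub j) (Set.Icc 0 1)
  hφ_maps : ∀ j, ∀ x ∈ Set.Icc (0:ℝ) 1, φ j x ∈ Jsub j
  hφ_rinv : ∀ j, ∀ x ∈ Set.Icc (0:ℝ) 1, f (φ j x) = x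
  hφ_linv : ∀ j, ∀ x ∈ Jsub j, φ j (f x) = x
  hfdiff : ∀ j, ∀ x ∈ Jsub j, DifferentiableAt ℝ f x
  hφdiff : ∀ j, ∀ x ∈ Set.Icc (0:ℝ) 1, DifferentiableAt ℝ (φ j) x
  hc : 0 < c
  hγ : γ ∈ Set.Ioc (0:ℝ) 1
  hHolder : ∀ j, ∀ x ∈ Jsub j, ∀ y ∈ Jsub j, |deriv f x - deriv f y| ≤ c * |x - y| ^ γ
  hb : IsGLB ((fun x => |deriv f x|) '' ⋃ j, Jsub j) b
  hB : IsLUB ((fun x => |deriv f x|) '' ⋃ j, Jsub j) B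
  hb1 : 1 < b

namespace CookieCutter

variable (cc : CookieCutter)

/-- `φ_σ = φ_{σ_1} ∘ ⋯ ∘ φ_{σ_n}` for a word `σ`. -/
def wordMap : List (Fin cc.N) → ℝ → ℝ
  | [] => id
  | j :: rest => cc.φ j ∘ wordMap rest

/-- The basic interval `J_σ = φ_σ(J)`. -/
def Jc (σ : List (Fin cc.N)) : Set ℝ := cc.wordMap σ '' Set.Icc 0 1

/-- The diameter `|J_σ|`. -/
def diamJ (σ : List (Fin cc.N)) : ℝ := Metric.diam (cc.Jc σ)

/-- `‖φ'_σ‖ = sup_{x ∈ J} |φ'_σ(x)|`. -/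
def φnorm (σ : List (Fin cc.N)) : ℝ :=
  sSup ((fun x => |deriv (cc.wordMap σ) x|) '' Set.Icc 0 1)

/-- The distortion constant `ξ = exp (c / (b^γ − 1))`. -/
def xi : ℝ := Real.exp (cc.c / (cc.b ^ cc.γ - 1))

/-- The cookie-cutter set `E = ⋂_{n ≥ 1} ⋃_{σ ∈ Ω_n} J_σ`. -/
def E : Set ℝ := ⋂ (n : ℕ) (_ : 1 ≤ n), ⋃ σ : Fin n → Fin cc.N, cc.Jc (List.ofFn σ)

/-- `η = ξ^{9h}`. -/
def eta (h : ℝ) : ℝ := cc.xi ^ ((9:ℝ) * h)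

/-- `L = η³ ξ^{3h}`. -/
def Lconst (h : ℝ) : ℝ := (cc.eta h) ^ 3 * cc.xi ^ ((3:ℝ) * h)

/-- A Gibbs-like measure for the cookie-cutter system: a Borel probability measure
supported on `E` with `η⁻¹|J_σ|^h ≤ μ(J_σ) ≤ η|J_σ|^h` for every word `σ`. -/
def IsGibbsLike (μ : Measure ℝ) (h : ℝ) : Prop :=
  IsProbabilityMeasure μ ∧ μ (cc.Eᶜ) = 0 ∧
    ∀ σ : List (Fin cc.N), σ ≠ [] →
      (cc.eta h)⁻¹ * cc.diamJ σ ^ h ≤ (μ (cc.Jc σ)).toReal ∧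
      (μ (cc.Jc σ)).toReal ≤ cc.eta h * cc.diamJ σ ^ h

/-- A finite maximal antichain in `Ω`. -/
def IsFMA (Γ : Finset (List (Fin cc.N))) : Prop :=
  (∀ σ ∈ Γ, σ ≠ []) ∧
  (∀ ω : ℕ → Fin cc.N, ∃ k : ℕ, 1 ≤ k ∧ (List.ofFn fun i : Fin k => ω i) ∈ Γ) ∧
  ∀ σ ∈ Γ, ∀ τ ∈ Γ, σ <+: τ → σ = τ

end CookieCutter

/-- The `n`-th quantization error of order `r`. -/
def Vnr (μ : Measure ℝ) (n : ℕ) (r : ℝ) : ℝ :=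
  sInf ((fun α : Finset ℝ => ∫ x, Metric.infDist x (α : Set ℝ) ^ r ∂μ) ''
    {α : Finset ℝ | α.Nonempty ∧ α.card ≤ n})

/-- The auxiliary quantization error `u_{n,r}` with `U = (0,1)`. -/
def unr (μ : Measure ℝ) (n : ℕ) (r : ℝ) : ℝ :=
  sInf ((fun α : Finset ℝ =>
      ∫ x, Metric.infDist x ((α : Set ℝ) ∪ (Set.Ioo (0:ℝ) 1)ᶜ) ^ r ∂μ) ''
    {α : Finset ℝ | α.card ≤ n})


namespace CookieCutter

variable (cc : CookieCutter)

lemma b_pos : 0 < cc.b := one_pos.trans cc.hb1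

lemma phi_mem {j : Fin cc.N} {x : ℝ} (hx : x ∈ Set.Icc (0:ℝ) 1) : cc.φ j x ∈ Set.Icc (0:ℝ) 1 :=
  cc.hJsub_sub j (cc.hφ_maps j x hx)

lemma phi_injOn (j : Fin cc.N) : Set.InjOn (cc.φ j) (Set.Icc 0 1) := fun x hx y hy hxy => by
  rw [← cc.hφ_rinv j x hx, hxy, cc.hφ_rinv j y hy]

lemma b_le_abs_deriv {j : Fin cc.N} {x : ℝ} (hx : x ∈ cc.Jsub j) : cc.b ≤ |deriv cc.f x| :=
  cc.hb.1 ⟨x, Set.mem_iUnion.2 ⟨j, hx⟩, rfl⟩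

lemma deriv_mul_deriv_phi (j : Fin cc.N) {x : ℝ} (hx : x ∈ Set.Icc (0:ℝ) 1) :
    deriv cc.f (cc.φ j x) * deriv (cc.φ j) x = 1 := by
  have h1 : HasDerivAt (cc.f ∘ cc.φ j) (deriv cc.f (cc.φ j x) * deriv (cc.φ j) x) x :=
    (cc.hfdiff j _ (cc.hφ_maps j x hx)).hasDerivAt.comp x (cc.hφdiff j x hx).hasDerivAt
  have h2 : HasDerivWithinAt (cc.f ∘ cc.φ j) 1 (Set.Icc 0 1) x :=
    (hasDerivWithinAt_id x _).congr (fun y hy => cc.hφ_rinv j y hy) (cc.hφ_rinv j x hx)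
  exact (uniqueDiffOn_Icc (zero_lt_one' ℝ) x hx).eq_deriv _ h1.hasDerivWithinAt h2

lemma abs_deriv_mul_abs_deriv_phi (j : Fin cc.N) {x : ℝ} (hx : x ∈ Set.Icc (0:ℝ) 1) :
    |deriv cc.f (cc.φ j x)| * |deriv (cc.φ j) x| = 1 := by
  rw [← abs_mul, cc.deriv_mul_deriv_phi j hx, abs_one]

lemma abs_deriv_phi_le (j : Fin cc.N) {x : ℝ} (hx : x ∈ Set.Icc (0:ℝ) 1) :
    |deriv (cc.φ j) x| ≤ cc.b⁻¹ := by
  have h1 := cc.abs_deriv_mul_abs_deriv_phi j hx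
  have h2 := cc.b_le_abs_deriv (cc.hφ_maps j x hx)
  rw [le_inv_comm₀ _ cc.b_pos]
  · rwa [← eq_inv_of_mul_eq_one_left h1]
  · exact pos_of_mul_pos_right (h1 ▸ one_pos) (abs_nonneg _)

lemma wordMap_mem (σ : List (Fin cc.N)) {x : ℝ} (hx : x ∈ Set.Icc (0:ℝ) 1) :
    cc.wordMap σ x ∈ Set.Icc (0:ℝ) 1 := by
  induction σ with
  | nil => exact hx
  | cons j σ ih => exact cc.phi_mem ih

lemma wordMap_append (σ τ : List (Fin cc.N)) :
    cc.wordMap (σ ++ τ) = cc.wordMap σ ∘ cc.wordMap τ := by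
  induction σ with
  | nil => rfl
  | cons j σ ih => simp [wordMap, ih, Function.comp_assoc]

lemma wordMap_injOn (σ : List (Fin cc.N)) : Set.InjOn (cc.wordMap σ) (Set.Icc 0 1) := by
  induction σ with
  | nil => exact Set.injOn_id _
  | cons j σ ih => exact (cc.phi_injOn j).comp ih fun x hx => cc.wordMap_mem σ hx

lemma differentiableAt_wordMap (σ : List (Fin cc.N)) {x : ℝ} (hx : x ∈ Set.Icc (0:ℝ) 1) :
    DifferentiableAt ℝ (cc.wordMap σ) x := by
  induction σ with
  | nil => exact differentiableAt_id
  | cons j σ ih => exact (cc.hφdiff j _ (cc.wordMap_mem σ hx)).comp x ih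

lemma deriv_wordMap_cons (j : Fin cc.N) (σ : List (Fin cc.N)) {x : ℝ}
    (hx : x ∈ Set.Icc (0:ℝ) 1) :
    deriv (cc.wordMap (j :: σ)) x = deriv (cc.φ j) (cc.wordMap σ x) * deriv (cc.wordMap σ) x :=
  deriv_comp x (cc.hφdiff j _ (cc.wordMap_mem σ hx)) (cc.differentiableAt_wordMap σ hx)

lemma abs_deriv_wordMap_pos (σ : List (Fin cc.N)) {x : ℝ} (hx : x ∈ Set.Icc (0:ℝ) 1) :
    0 < |deriv (cc.wordMap σ) x| := by
  induction σ with
  | nil => simp [wordMap]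
  | cons j σ ih =>
    rw [cc.deriv_wordMap_cons j σ hx, abs_mul]
    refine mul_pos (abs_pos.2 fun h0 => ?_) ih
    simpa [h0] using cc.deriv_mul_deriv_phi j (cc.wordMap_mem σ hx)

lemma abs_deriv_wordMap_le (σ : List (Fin cc.N)) {x : ℝ} (hx : x ∈ Set.Icc (0:ℝ) 1) :
    |deriv (cc.wordMap σ) x| ≤ cc.b⁻¹ ^ σ.length := by
  induction σ with
  | nil => simp [wordMap]
  | cons j σ ih =>
    rw [cc.deriv_wordMap_cons j σ hx, abs_mul, List.length_cons, pow_succ']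
    exact mul_le_mul (cc.abs_deriv_phi_le j (cc.wordMap_mem σ hx)) ih (abs_nonneg _)
      (inv_nonneg.2 cc.b_pos.le)

lemma abs_wordMap_sub_le_of_abs_deriv_le (σ : List (Fin cc.N)) {M x y : ℝ}
    (hM : ∀ z ∈ Set.Icc (0:ℝ) 1, |deriv (cc.wordMap σ) z| ≤ M)
    (hx : x ∈ Set.Icc (0:ℝ) 1) (hy : y ∈ Set.Icc (0:ℝ) 1) :
    |cc.wordMap σ x - cc.wordMap σ y| ≤ M * |x - y| :=
  (convex_Icc (0:ℝ) 1).norm_image_sub_le_of_norm_deriv_le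
    (fun _ hz => cc.differentiableAt_wordMap σ hz) hM hy hx

lemma abs_wordMap_sub_le (σ : List (Fin cc.N)) {x y : ℝ}
    (hx : x ∈ Set.Icc (0:ℝ) 1) (hy : y ∈ Set.Icc (0:ℝ) 1) :
    |cc.wordMap σ x - cc.wordMap σ y| ≤ cc.b⁻¹ ^ σ.length * |x - y| :=
  cc.abs_wordMap_sub_le_of_abs_deriv_le σ (fun _ hz => cc.abs_deriv_wordMap_le σ hz) hx hy

lemma abs_deriv_phi_le_exp_mul (j : Fin cc.N) {u v : ℝ}
    (hu : u ∈ Set.Icc (0:ℝ) 1) (hv : v ∈ Set.Icc (0:ℝ) 1) :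
    |deriv (cc.φ j) u| ≤ Real.exp (cc.c * |u - v| ^ cc.γ) * |deriv (cc.φ j) v| := by
  have hlip : |cc.φ j v - cc.φ j u| ≤ |u - v| := by
    have h1 := cc.abs_wordMap_sub_le [j] hv hu
    have h2 : cc.b⁻¹ ≤ 1 := inv_le_one_of_one_le₀ cc.hb1.le
    simp only [wordMap, Function.comp_id, List.length_singleton, pow_one] at h1
    rw [abs_sub_comm u v]
    nlinarith [abs_nonneg (v - u)]
  have hpow : |cc.φ j v - cc.φ j u| ^ cc.γ ≤ |u - v| ^ cc.γ :=
    Real.rpow_le_rpow (abs_nonneg _) hlip cc.hγ.1.le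
  have hH := cc.hHolder j _ (cc.hφ_maps j v hv) _ (cc.hφ_maps j u hu)
  have hsub := abs_sub_abs_le_abs_sub (deriv cc.f (cc.φ j v)) (deriv cc.f (cc.φ j u))
  have hub := cc.b_le_abs_deriv (cc.hφ_maps j u hu)
  have hexp := Real.add_one_le_exp (cc.c * |u - v| ^ cc.γ)
  have hpos : 0 ≤ cc.c * |u - v| ^ cc.γ := mul_nonneg cc.hc.le (by positivity)
  have hc := mul_le_mul_of_nonneg_left hpow cc.hc.le
  have hf : |deriv cc.f (cc.φ j v)| ≤
      Real.exp (cc.c * |u - v| ^ cc.γ) * |deriv cc.f (cc.φ j u)| := by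
    have hb1 := cc.hb1
    nlinarith
  have hmu := cc.abs_deriv_mul_abs_deriv_phi j hu
  have hmv := cc.abs_deriv_mul_abs_deriv_phi j hv
  calc |deriv (cc.φ j) u|
      = |deriv cc.f (cc.φ j v)| * (|deriv (cc.φ j) v| * |deriv (cc.φ j) u|) := by
        rw [← mul_assoc, hmv, one_mul]
    _ ≤ Real.exp (cc.c * |u - v| ^ cc.γ) * |deriv cc.f (cc.φ j u)| *
        (|deriv (cc.φ j) v| * |deriv (cc.φ j) u|) := by gcongr
    _ = Real.exp (cc.c * |u - v| ^ cc.γ) * |deriv (cc.φ j) v| *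
        (|deriv cc.f (cc.φ j u)| * |deriv (cc.φ j) u|) := by ring
    _ = _ := by rw [hmu, mul_one]

lemma abs_deriv_wordMap_le_exp_sum_mul (σ : List (Fin cc.N)) {x y : ℝ}
    (hx : x ∈ Set.Icc (0:ℝ) 1) (hy : y ∈ Set.Icc (0:ℝ) 1) :
    |deriv (cc.wordMap σ) x| ≤
      Real.exp (cc.c * ∑ i ∈ Finset.range σ.length, (cc.b⁻¹ ^ cc.γ) ^ i) *
        |deriv (cc.wordMap σ) y| := by
  induction σ with
  | nil => simp [wordMap]
  | cons j σ ih =>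
    have hx' := cc.wordMap_mem σ hx
    have hy' := cc.wordMap_mem σ hy
    have hb := inv_nonneg.2 cc.b_pos.le
    have hxy : |x - y| ≤ 1 := by
      rw [abs_le]; constructor <;> linarith [hx.1, hx.2, hy.1, hy.2]
    have hd : |cc.wordMap σ x - cc.wordMap σ y| ^ cc.γ ≤ (cc.b⁻¹ ^ cc.γ) ^ σ.length := by
      rw [← Real.rpow_natCast, ← Real.rpow_mul hb, mul_comm cc.γ, Real.rpow_mul hb,
        Real.rpow_natCast]
      refine Real.rpow_le_rpow (abs_nonneg _) ?_ cc.hγ.1.le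
      exact (cc.abs_wordMap_sub_le σ hx hy).trans (mul_le_of_le_one_right (by positivity) hxy)
    have hc := cc.hc
    rw [cc.deriv_wordMap_cons j σ hx, cc.deriv_wordMap_cons j σ hy, abs_mul, abs_mul,
      List.length_cons, Finset.sum_range_succ, mul_add, Real.exp_add]
    calc _ ≤ (Real.exp (cc.c * (cc.b⁻¹ ^ cc.γ) ^ σ.length) *
              |deriv (cc.φ j) (cc.wordMap σ y)|) * _ :=
          mul_le_mul ((cc.abs_deriv_phi_le_exp_mul j hx' hy').trans (by gcongr)) ih
            (abs_nonneg _) (by positivity)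
      _ = _ := by ring

/-- Bounded distortion, uniformly over all words. -/
lemma exists_distortion : ∃ K : ℝ, 0 < K ∧ ∀ σ : List (Fin cc.N),
    ∀ x ∈ Set.Icc (0:ℝ) 1, ∀ y ∈ Set.Icc (0:ℝ) 1,
      |deriv (cc.wordMap σ) x| ≤ K * |deriv (cc.wordMap σ) y| := by
  have hb := inv_nonneg.2 cc.b_pos.le
  have hq0 : 0 ≤ cc.b⁻¹ ^ cc.γ := Real.rpow_nonneg hb _
  have hq1 : cc.b⁻¹ ^ cc.γ < 1 := Real.rpow_lt_one hb (inv_lt_one_of_one_lt₀ cc.hb1) cc.hγ.1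
  refine ⟨Real.exp (cc.c * ∑' i : ℕ, (cc.b⁻¹ ^ cc.γ) ^ i), Real.exp_pos _,
    fun σ x hx y hy => (cc.abs_deriv_wordMap_le_exp_sum_mul σ hx hy).trans ?_⟩
  have hs := (summable_geometric_of_lt_one hq0 hq1).sum_le_tsum (Finset.range σ.length)
    fun i _ => pow_nonneg hq0 i
  have hc := cc.hc
  gcongr

lemma Jc_nil : cc.Jc [] = Set.Icc 0 1 := Set.image_id _

lemma diamJ_nil : cc.diamJ [] = 1 := by
  rw [diamJ, Jc_nil, Real.diam_Icc zero_le_one, sub_zero]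

lemma exists_Jc_eq_Icc (σ : List (Fin cc.N)) :
    ∃ u v : ℝ, u < v ∧ cc.Jc σ = Set.Icc u v := by
  have hcont : ContinuousOn (cc.wordMap σ) (Set.Icc 0 1) := fun x hx =>
    (cc.differentiableAt_wordMap σ hx).continuousAt.continuousWithinAt
  have h0 : (0:ℝ) ∈ Set.Icc (0:ℝ) 1 := by simp
  have h1 : (1:ℝ) ∈ Set.Icc (0:ℝ) 1 := by simp
  have hI : cc.Jc σ = Set.Icc (sInf (cc.wordMap σ '' Set.Icc 0 1))
      (sSup (cc.wordMap σ '' Set.Icc 0 1)) :=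
    ContinuousOn.image_Icc zero_le_one hcont
  refine ⟨_, _, ?_, hI⟩
  have m0 : cc.wordMap σ 0 ∈ cc.Jc σ := ⟨0, h0, rfl⟩
  have m1 : cc.wordMap σ 1 ∈ cc.Jc σ := ⟨1, h1, rfl⟩
  rw [hI] at m0 m1
  by_contra! hle
  exact zero_ne_one (cc.wordMap_injOn σ h0 h1
    (le_antisymm (by linarith [m0.2, m1.1]) (by linarith [m1.2, m0.1])))

lemma diamJ_pos (σ : List (Fin cc.N)) : 0 < cc.diamJ σ := by
  obtain ⟨u, v, huv, hJ⟩ := cc.exists_Jc_eq_Icc σ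
  rw [diamJ, hJ, Real.diam_Icc huv.le]
  linarith

lemma volume_Jc (σ : List (Fin cc.N)) : volume (cc.Jc σ) = ENNReal.ofReal (cc.diamJ σ) := by
  obtain ⟨u, v, huv, hJ⟩ := cc.exists_Jc_eq_Icc σ
  rw [diamJ, hJ, Real.diam_Icc huv.le, Real.volume_Icc]

lemma measurableSet_Jc (σ : List (Fin cc.N)) : MeasurableSet (cc.Jc σ) := by
  obtain ⟨u, v, -, hJ⟩ := cc.exists_Jc_eq_Icc σ
  rw [hJ]
  exact measurableSet_Icc

lemma isBounded_Jc (σ : List (Fin cc.N)) : Bornology.IsBounded (cc.Jc σ) := by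
  obtain ⟨u, v, -, hJ⟩ := cc.exists_Jc_eq_Icc σ
  rw [hJ]
  exact isBounded_Icc u v

lemma diamJ_le_of_abs_deriv_le (σ : List (Fin cc.N)) {M : ℝ}
    (hM : ∀ z ∈ Set.Icc (0:ℝ) 1, |deriv (cc.wordMap σ) z| ≤ M) : cc.diamJ σ ≤ M := by
  have hM0 : 0 ≤ M := (abs_nonneg _).trans (hM 0 (by simp))
  refine Metric.diam_le_of_forall_dist_le hM0 ?_
  rintro _ ⟨x, hx, rfl⟩ _ ⟨y, hy, rfl⟩
  refine (cc.abs_wordMap_sub_le_of_abs_deriv_le σ hM hx hy).trans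
    (mul_le_of_le_one_right hM0 ?_)
  rw [abs_le]; constructor <;> linarith [hx.1, hx.2, hy.1, hy.2]

lemma diamJ_le_pow (σ : List (Fin cc.N)) : cc.diamJ σ ≤ cc.b⁻¹ ^ σ.length :=
  cc.diamJ_le_of_abs_deriv_le σ fun _ hz => cc.abs_deriv_wordMap_le σ hz

lemma Jc_append_subset (σ τ : List (Fin cc.N)) : cc.Jc (σ ++ τ) ⊆ cc.Jc σ := by
  rintro _ ⟨x, hx, rfl⟩
  exact ⟨_, cc.wordMap_mem τ hx, by rw [cc.wordMap_append]; rfl⟩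

lemma disjoint_Jc_append_singleton (σ : List (Fin cc.N)) {i j : Fin cc.N} (hij : i ≠ j) :
    Disjoint (cc.Jc (σ ++ [i])) (cc.Jc (σ ++ [j])) := by
  rw [Set.disjoint_left]
  rintro _ ⟨x, hx, rfl⟩ ⟨y, hy, hxy⟩
  simp only [wordMap_append, Function.comp_apply] at hxy
  have := cc.wordMap_injOn σ (cc.wordMap_mem [j] hy) (cc.wordMap_mem [i] hx) hxy
  refine Set.disjoint_left.1 (cc.hJsub_disj i j hij) (cc.hφ_maps i x hx) ?_
  change cc.φ j y = cc.φ i x at this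
  rw [← this]
  exact cc.hφ_maps j y hy

lemma exists_mem_Jc_append_singleton (σ τ : List (Fin cc.N)) (hl : τ.length = σ.length + 1)
    {x : ℝ} (hσ : x ∈ cc.Jc σ) (hτ : x ∈ cc.Jc τ) : ∃ j, x ∈ cc.Jc (σ ++ [j]) := by
  induction σ generalizing τ x with
  | nil =>
    obtain ⟨j, rfl⟩ := List.length_eq_one_iff.1 hl
    exact ⟨j, hτ⟩
  | cons i σ ih =>
    obtain _ | ⟨k, τ⟩ := τ
    · simp at hl
    obtain ⟨y, hy, rfl⟩ := hσ
    obtain ⟨z, hz, hyz⟩ := hτ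
    simp only [wordMap, Function.comp_apply] at hyz
    have hy' := cc.wordMap_mem σ hy
    have hz' := cc.wordMap_mem τ hz
    obtain rfl : k = i := by
      by_contra hki
      exact Set.disjoint_left.1 (cc.hJsub_disj k i hki) (cc.hφ_maps k _ hz')
        (hyz ▸ cc.hφ_maps i _ hy')
    have heq := cc.phi_injOn k hz' hy' hyz
    obtain ⟨j, w, hw, hwy⟩ := ih τ (by simpa using hl) ⟨y, hy, rfl⟩ ⟨z, hz, heq⟩
    exact ⟨j, w, hw, by simp only [List.cons_append, wordMap, Function.comp_apply, hwy]⟩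

lemma exists_mul_diamJ_le_diamJ_append_singleton : ∃ a : ℝ, 0 < a ∧ a ≤ 1 ∧
    ∀ (σ : List (Fin cc.N)) (j : Fin cc.N), a * cc.diamJ σ ≤ cc.diamJ (σ ++ [j]) := by
  obtain ⟨K, hK, hdist⟩ := cc.exists_distortion
  have : Nonempty (Fin cc.N) := ⟨⟨0, by have := cc.hN; omega⟩⟩
  obtain ⟨j₀, hj₀⟩ := Finite.exists_min fun j => cc.diamJ [j]
  refine ⟨min 1 (K⁻¹ * cc.diamJ [j₀]),
    lt_min one_pos (mul_pos (inv_pos.2 hK) (cc.diamJ_pos _)), min_le_left _ _, fun σ j => ?_⟩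
  have hσ := cc.diamJ_pos σ
  refine (mul_le_mul_of_nonneg_right (min_le_right _ _) hσ.le).trans ?_
  obtain ⟨u, v, huv, hJ⟩ := cc.exists_Jc_eq_Icc [j]
  have hsub : Set.Icc u v ⊆ Set.Icc 0 1 := by
    rw [← hJ]
    rintro _ ⟨x, hx, rfl⟩
    exact cc.wordMap_mem [j] hx
  obtain ⟨z, hz, hzd⟩ := exists_deriv_eq_slope (cc.wordMap σ) huv
    (fun x hx => (cc.differentiableAt_wordMap σ (hsub hx)).continuousAt.continuousWithinAt)
    (fun x hx => (cc.differentiableAt_wordMap σ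
      (hsub (Set.Ioo_subset_Icc_self hx))).differentiableWithinAt)
  have hz' := hsub (Set.Ioo_subset_Icc_self hz)
  have hle : cc.diamJ σ ≤ K * |deriv (cc.wordMap σ) z| :=
    cc.diamJ_le_of_abs_deriv_le σ fun w hw => hdist σ w hw z hz'
  have hdj : cc.diamJ [j] = v - u := by rw [diamJ, hJ, Real.diam_Icc huv.le]
  have himg : ∀ w ∈ Set.Icc u v, cc.wordMap σ w ∈ cc.Jc (σ ++ [j]) := by
    rw [← hJ]
    rintro _ ⟨x, hx, rfl⟩
    exact ⟨x, hx, by rw [wordMap_append]; rfl⟩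
  have hdd : |deriv (cc.wordMap σ) z| * (v - u) ≤ cc.diamJ (σ ++ [j]) := by
    rw [hzd, abs_div, abs_of_pos (sub_pos.2 huv), div_mul_cancel₀ _ (sub_pos.2 huv).ne']
    exact Metric.dist_le_diam_of_mem (cc.isBounded_Jc _) (himg v ⟨huv.le, le_rfl⟩)
      (himg u ⟨le_rfl, huv.le⟩)
  have hmin : cc.diamJ [j₀] ≤ v - u := hdj ▸ hj₀ j
  calc K⁻¹ * cc.diamJ [j₀] * cc.diamJ σ
      ≤ K⁻¹ * (v - u) * (K * |deriv (cc.wordMap σ) z|) := by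
        have := cc.diamJ_pos [j₀]
        have := sub_pos.2 huv
        gcongr
    _ = |deriv (cc.wordMap σ) z| * (v - u) := by field_simp
    _ ≤ _ := hdd

lemma E_subset_Icc : cc.E ⊆ Set.Icc 0 1 := fun x hx => by
  obtain ⟨σ, y, hy, rfl⟩ := Set.mem_iUnion.1 (Set.mem_iInter₂.1 hx 1 le_rfl)
  exact cc.wordMap_mem _ hy

lemma inter_E_subset_iUnion (σ : List (Fin cc.N)) :
    cc.Jc σ ∩ cc.E ⊆ ⋃ j, cc.Jc (σ ++ [j]) := by
  rintro x ⟨hσ, hE⟩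
  obtain ⟨τ, hτ⟩ := Set.mem_iUnion.1 (Set.mem_iInter₂.1 hE (σ.length + 1) (by omega))
  exact Set.mem_iUnion.2 (cc.exists_mem_Jc_append_singleton σ _ (by simp) hσ hτ)

lemma eta_pos (h : ℝ) : 0 < cc.eta h := Real.rpow_pos_of_pos (Real.exp_pos _) _

variable {cc}

lemma IsGibbsLike.measure_inter_Jc_le_sum {μ : Measure ℝ} {h : ℝ} (hμ : cc.IsGibbsLike μ h)
    (σ : List (Fin cc.N)) (s : Set ℝ) :
    μ (s ∩ cc.Jc σ) ≤ ∑ j, μ (s ∩ cc.Jc (σ ++ [j])) := by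
  have hsub : s ∩ cc.Jc σ ⊆ (⋃ j, s ∩ cc.Jc (σ ++ [j])) ∪ cc.Eᶜ := by
    rintro x ⟨hs, hσ⟩
    by_cases hE : x ∈ cc.E
    · obtain ⟨j, hj⟩ := Set.mem_iUnion.1 (cc.inter_E_subset_iUnion σ ⟨hσ, hE⟩)
      exact Or.inl (Set.mem_iUnion.2 ⟨j, hs, hj⟩)
    · exact Or.inr hE
  calc μ (s ∩ cc.Jc σ) ≤ _ := measure_mono hsub
    _ ≤ μ (⋃ j, s ∩ cc.Jc (σ ++ [j])) + μ cc.Eᶜ := measure_union_le _ _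
    _ = μ (⋃ j, s ∩ cc.Jc (σ ++ [j])) := by rw [hμ.2.1, add_zero]
    _ ≤ _ := measure_iUnion_fintype_le _ _

lemma IsGibbsLike.measure_closedBall_inter_Jc_le_of_diamJ_le {μ : Measure ℝ} {h : ℝ}
    (hμ : cc.IsGibbsLike μ h) (hh : 0 < h) {a : ℝ} (ha : 0 < a)
    (x : ℝ) {ρ : ℝ} (hρ : 0 < ρ) (hρ1 : ρ < 1)
    (σ : List (Fin cc.N)) (hσ : a * ρ ≤ cc.diamJ σ) (hsmall : cc.diamJ σ ≤ ρ) :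
    μ (closedBall x ρ ∩ cc.Jc σ) ≤
      ENNReal.ofReal (cc.eta h * a⁻¹ * ρ ^ (h - 1)) * volume (closedBall x (2 * ρ) ∩ cc.Jc σ) := by
  have := hμ.1
  have hη := cc.eta_pos h
  rcases Set.eq_empty_or_nonempty (closedBall x ρ ∩ cc.Jc σ) with he | ⟨y, hy, hyσ⟩
  · simp [he]
  have hsub : cc.Jc σ ⊆ closedBall x (2 * ρ) := fun z hz => by
    have h1 := Metric.dist_le_diam_of_mem (cc.isBounded_Jc σ) hz hyσ
    have h2 := dist_triangle z y x
    rw [mem_closedBall] at hy ⊢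
    have h3 : dist z y ≤ ρ := h1.trans hsmall
    linarith
  have hne : σ ≠ [] := by
    rintro rfl
    linarith [cc.diamJ_nil]
  rw [Set.inter_eq_right.2 hsub, volume_Jc, ← ENNReal.ofReal_mul (by positivity)]
  refine (measure_mono Set.inter_subset_right).trans ?_
  rw [← ENNReal.ofReal_toReal (measure_ne_top μ (cc.Jc σ))]
  refine ENNReal.ofReal_le_ofReal (((hμ.2.2 σ hne).2).trans ?_)
  calc cc.eta h * cc.diamJ σ ^ h ≤ cc.eta h * ρ ^ h := by
        have := cc.diamJ_pos σ
        gcongr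
    _ = cc.eta h * a⁻¹ * ρ ^ (h - 1) * (a * ρ) := by
        rw [Real.rpow_sub_one hρ.ne']
        field_simp
    _ ≤ _ := by gcongr

/-- A Gibbs-like measure is dominated at scale `ρ` by `ρ ^ (h - 1)` times Lebesgue measure. -/
lemma IsGibbsLike.measure_closedBall_inter_Jc_le {μ : Measure ℝ} {h : ℝ}
    (hμ : cc.IsGibbsLike μ h) (hh : 0 < h) {a : ℝ} (ha : 0 < a)
    (hchild : ∀ (σ : List (Fin cc.N)) (j : Fin cc.N), a * cc.diamJ σ ≤ cc.diamJ (σ ++ [j]))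
    (x : ℝ) {ρ : ℝ} (hρ : 0 < ρ) (hρ1 : ρ < 1) {n : ℕ} (hn : cc.b⁻¹ ^ n ≤ ρ)
    (m : ℕ) (σ : List (Fin cc.N)) (hm : n ≤ σ.length + m) (hσ : a * ρ ≤ cc.diamJ σ) :
    μ (closedBall x ρ ∩ cc.Jc σ) ≤
      ENNReal.ofReal (cc.eta h * a⁻¹ * ρ ^ (h - 1)) * volume (closedBall x (2 * ρ) ∩ cc.Jc σ) := by
  induction m generalizing σ with
  | zero =>
    refine hμ.measure_closedBall_inter_Jc_le_of_diamJ_le hh ha x hρ hρ1 σ hσ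
      ((cc.diamJ_le_pow σ).trans ((pow_le_pow_of_le_one ?_ ?_ ?_).trans hn))
    · exact inv_nonneg.2 cc.b_pos.le
    · exact inv_le_one_of_one_le₀ cc.hb1.le
    · simpa using hm
  | succ m ih =>
    rcases le_total (cc.diamJ σ) ρ with hsmall | hbig
    · exact hμ.measure_closedBall_inter_Jc_le_of_diamJ_le hh ha x hρ hρ1 σ hσ hsmall
    have hvol : ∑ j, volume (closedBall x (2 * ρ) ∩ cc.Jc (σ ++ [j])) ≤
        volume (closedBall x (2 * ρ) ∩ cc.Jc σ) := by
      rw [← tsum_fintype (L := .unconditional _), ← measure_iUnion]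
      · exact measure_mono (Set.iUnion_subset fun j =>
          Set.inter_subset_inter_right _ (cc.Jc_append_subset σ [j]))
      · exact fun i j hij => (cc.disjoint_Jc_append_singleton σ hij).mono
          Set.inter_subset_right Set.inter_subset_right
      · exact fun j => measurableSet_closedBall.inter (cc.measurableSet_Jc _)
    refine (hμ.measure_inter_Jc_le_sum σ _).trans ((Finset.sum_le_sum fun j _ => ih (σ ++ [j])
      (by simp; omega) ?_).trans ?_)
    · exact (mul_le_mul_of_nonneg_left hbig ha.le).trans (hchild σ j)
    · rw [← Finset.mul_sum]
      gcongr

lemma IsGibbsLike.exists_measureReal_closedBall_le {μ : Measure ℝ} {h : ℝ}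
    (hμ : cc.IsGibbsLike μ h) (hh : 0 < h) : ∃ C : ℝ, 0 < C ∧
      ∀ (x ρ : ℝ), 0 < ρ → ρ < 1 → μ.real (closedBall x ρ) ≤ C * ρ ^ h := by
  obtain ⟨a, ha, ha1, hchild⟩ := cc.exists_mul_diamJ_le_diamJ_append_singleton
  have hη := cc.eta_pos h
  refine ⟨cc.eta h * a⁻¹ * 4, by positivity, fun x ρ hρ hρ1 => ?_⟩
  obtain ⟨n, hn⟩ := exists_pow_lt_of_lt_one hρ (inv_lt_one_of_one_lt₀ cc.hb1)
  have key := hμ.measure_closedBall_inter_Jc_le hh ha hchild x hρ hρ1 hn.le n [] (by simp)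
    (by rw [diamJ_nil]; nlinarith)
  have hsub : closedBall x ρ ⊆ (closedBall x ρ ∩ cc.Jc []) ∪ cc.Eᶜ := fun y hy => by
    by_cases hE : y ∈ cc.E
    · exact Or.inl ⟨hy, cc.Jc_nil ▸ cc.E_subset_Icc hE⟩
    · exact Or.inr hE
  have hball : μ (closedBall x ρ) ≤ ENNReal.ofReal (cc.eta h * a⁻¹ * 4 * ρ ^ h) := calc
    μ (closedBall x ρ) ≤ μ (closedBall x ρ ∩ cc.Jc []) + μ cc.Eᶜ :=
        (measure_mono hsub).trans (measure_union_le _ _)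
    _ ≤ ENNReal.ofReal (cc.eta h * a⁻¹ * ρ ^ (h - 1)) * volume (closedBall x (2 * ρ)) := by
        rw [hμ.2.1, add_zero]
        exact key.trans (by gcongr; exact Set.inter_subset_left)
    _ = ENNReal.ofReal (cc.eta h * a⁻¹ * 4 * ρ ^ h) := by
        rw [Real.volume_closedBall, ← ENNReal.ofReal_mul (by positivity),
          Real.rpow_sub_one hρ.ne']
        congr 1
        field_simp
        ring
  exact ENNReal.toReal_le_of_le_ofReal (by positivity) hball

lemma φnorm_bounds (σ : List (Fin cc.N)) :
    0 < cc.φnorm σ ∧ cc.φnorm σ ≤ cc.b⁻¹ ^ σ.length ∧ cc.diamJ σ ≤ cc.φnorm σ := by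
  have hle : ∀ y ∈ (fun x => |deriv (cc.wordMap σ) x|) '' Set.Icc (0:ℝ) 1,
      y ≤ cc.b⁻¹ ^ σ.length := by
    rintro _ ⟨x, hx, rfl⟩
    exact cc.abs_deriv_wordMap_le σ hx
  have hsup : ∀ z ∈ Set.Icc (0:ℝ) 1, |deriv (cc.wordMap σ) z| ≤ cc.φnorm σ := fun z hz =>
    le_csSup ⟨_, hle⟩ ⟨z, hz, rfl⟩
  have h0 : (0:ℝ) ∈ Set.Icc (0:ℝ) 1 := by simp
  exact ⟨(cc.abs_deriv_wordMap_pos σ h0).trans_le (hsup 0 h0),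
    csSup_le ⟨_, 0, h0, rfl⟩ hle, cc.diamJ_le_of_abs_deriv_le σ hsup⟩

/-- The quantization dimension `κ` is at most the Gibbs exponent `h`. -/
lemma IsGibbsLike.quantizationDim_le {μ : Measure ℝ} {h : ℝ} (hμ : cc.IsGibbsLike μ h)
    (hh : 0 < h)
    (hP : Tendsto (fun k : ℕ => (1 / (k : ℝ)) * Real.log
      (∑ σ : Fin k → Fin cc.N, cc.φnorm (List.ofFn σ) ^ h)) atTop (nhds 0))
    {r κ : ℝ} (hr : 0 < r) (hκ : 0 < κ)
    (hκlim : Tendsto (fun n : ℕ => (1 / (n : ℝ)) * Real.log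
      (∑ σ : Fin n → Fin cc.N,
        ((μ (cc.Jc (List.ofFn σ))).toReal * cc.φnorm (List.ofFn σ) ^ r) ^ (κ / (r + κ))))
      atTop (nhds 0)) : κ ≤ h := by
  by_contra! hlt
  have hη := cc.eta_pos h
  have hb := cc.b_pos
  have : Nonempty (Fin cc.N) := ⟨⟨0, by have := cc.hN; omega⟩⟩
  set q := κ / (r + κ) with hq
  have hq0 : 0 < q := by positivity
  set t := (h + r) * q - h with ht
  have ht0 : 0 < t := by
    have : t = r * (κ - h) / (r + κ) := by
      rw [ht, hq]
      field_simp
      ring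
    rw [this]
    exact div_pos (mul_pos hr (sub_pos.2 hlt)) (by positivity)
  have hlogb := Real.log_pos cc.hb1
  have hbound : ∀ k : ℕ, 1 ≤ k → (1 / (k : ℝ)) * Real.log
      (∑ σ : Fin k → Fin cc.N,
        ((μ (cc.Jc (List.ofFn σ))).toReal * cc.φnorm (List.ofFn σ) ^ r) ^ q) ≤
      (1 / (k : ℝ)) * (q * Real.log (cc.eta h)) - t * Real.log cc.b + (1 / (k : ℝ)) * Real.log
      (∑ σ : Fin k → Fin cc.N, cc.φnorm (List.ofFn σ) ^ h) := by
    intro k hk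
    have hk0 : (0:ℝ) < k := by exact_mod_cast hk
    have hne : ∀ σ : Fin k → Fin cc.N, List.ofFn σ ≠ [] := fun σ h0 => by
      have := congrArg List.length h0
      simp at this
      omega
    have hterm : ∀ σ : Fin k → Fin cc.N,
        ((μ (cc.Jc (List.ofFn σ))).toReal * cc.φnorm (List.ofFn σ) ^ r) ^ q ≤
        cc.eta h ^ q * (cc.b⁻¹ ^ k) ^ t * cc.φnorm (List.ofFn σ) ^ h := by
      intro σ
      obtain ⟨hp, hpb, hdp⟩ := φnorm_bounds (List.ofFn σ)
      rw [List.length_ofFn] at hpb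
      have hd := cc.diamJ_pos (List.ofFn σ)
      calc _ ≤ (cc.eta h * cc.φnorm (List.ofFn σ) ^ h * cc.φnorm (List.ofFn σ) ^ r) ^ q := by
            have := (hμ.2.2 _ (hne σ)).2
            gcongr
            exact this.trans (by gcongr)
        _ = cc.eta h ^ q * cc.φnorm (List.ofFn σ) ^ t * cc.φnorm (List.ofFn σ) ^ h := by
            rw [mul_assoc, ← Real.rpow_add hp, Real.mul_rpow hη.le (by positivity),
              ← Real.rpow_mul hp.le, mul_assoc, ← Real.rpow_add hp, ht, sub_add_cancel]
        _ ≤ _ := by gcongr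
    have hpos : 0 < ∑ σ : Fin k → Fin cc.N,
        ((μ (cc.Jc (List.ofFn σ))).toReal * cc.φnorm (List.ofFn σ) ^ r) ^ q := by
      refine Finset.sum_pos (fun σ _ => ?_) Finset.univ_nonempty
      have h1 := (hμ.2.2 _ (hne σ)).1
      have h2 := cc.diamJ_pos (List.ofFn σ)
      have h3 : 0 < (μ (cc.Jc (List.ofFn σ))).toReal := lt_of_lt_of_le (by positivity) h1
      have h4 := (φnorm_bounds (List.ofFn σ)).1
      positivity
    have hpos' : 0 < ∑ σ : Fin k → Fin cc.N, cc.φnorm (List.ofFn σ) ^ h :=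
      Finset.sum_pos (fun σ _ => Real.rpow_pos_of_pos (φnorm_bounds _).1 _)
        Finset.univ_nonempty
    have hle := Real.log_le_log hpos (Finset.sum_le_sum fun σ _ => hterm σ)
    rw [← Finset.mul_sum, Real.log_mul (by positivity) hpos'.ne', Real.log_mul (by positivity)
      (by positivity), Real.log_rpow hη, Real.log_rpow (by positivity), Real.log_pow,
      Real.log_inv] at hle
    calc _ ≤ _ := mul_le_mul_of_nonneg_left hle (by positivity)
      _ = _ := by
        field_simp
        ring
  have hlim : Tendsto (fun k : ℕ => (1 / (k : ℝ)) * (q * Real.log (cc.eta h)) -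
      t * Real.log cc.b + (1 / (k : ℝ)) * Real.log
      (∑ σ : Fin k → Fin cc.N, cc.φnorm (List.ofFn σ) ^ h)) atTop
      (nhds (0 * (q * Real.log (cc.eta h)) - t * Real.log cc.b + 0)) :=
    ((tendsto_one_div_atTop_nhds_zero_nat.mul_const _).sub_const _).add hP
  have := le_of_tendsto_of_tendsto hκlim hlim
    (eventually_atTop.2 ⟨1, fun k hk => hbound k hk⟩)
  nlinarith [mul_pos ht0 hlogb]

end CookieCutter

lemma half_rpow_le_Vnr {μ : Measure ℝ} [IsProbabilityMeasure μ] {s : Set ℝ} (hs : IsCompact s)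
    (hμs : ∀ᵐ x ∂μ, x ∈ s) {r ρ : ℝ} (hr : 0 < r) (hρ : 0 < ρ) {n : ℕ} (hn : 1 ≤ n)
    {δ : ℝ} (hball : ∀ x, μ.real (closedBall x ρ) ≤ δ) (hδ : n * δ ≤ 1 / 2) :
    ρ ^ r / 2 ≤ Vnr μ n r := by
  refine le_csInf ⟨_, {0}, by simpa using hn, rfl⟩ ?_
  rintro _ ⟨α, ⟨hα, hcard⟩, rfl⟩
  have hcont : Continuous fun x : ℝ => infDist x (α : Set ℝ) ^ r :=
    (continuous_infDist_pt _).rpow_const fun _ => Or.inr hr.le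
  have hint : Integrable (fun x : ℝ => infDist x (α : Set ℝ) ^ r) μ := by
    obtain ⟨M, hM⟩ := hs.exists_bound_of_continuousOn hcont.continuousOn
    exact Integrable.of_bound hcont.aestronglyMeasurable M (hμs.mono hM)
  have hmarkov := mul_meas_ge_le_integral_of_nonneg
    (ae_of_all μ fun x => Real.rpow_nonneg (infDist_nonneg (x := x) (s := (α : Set ℝ))) r)
    hint (ρ ^ r)
  have hfar : (⋃ a ∈ α, closedBall a ρ)ᶜ ⊆ {x | ρ ^ r ≤ infDist x (α : Set ℝ) ^ r} := by
    intro x hx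
    refine Real.rpow_le_rpow hρ.le ((le_infDist (by simpa using hα)).2 fun {y} hy => ?_) hr.le
    by_contra! hlt
    exact hx (Set.mem_iUnion₂.2 ⟨y, by simpa using hy, hlt.le⟩)
  have hnear : μ.real (⋃ a ∈ α, closedBall a ρ) ≤ 1 / 2 := by
    have hδ0 : 0 ≤ δ := measureReal_nonneg.trans (hball 0)
    calc μ.real (⋃ a ∈ α, closedBall a ρ) ≤ ∑ a ∈ α, μ.real (closedBall a ρ) :=
          measureReal_biUnion_finset_le _ _
      _ ≤ α.card * δ := by
          simpa using Finset.sum_le_card_nsmul α _ δ fun a _ => hball a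
      _ ≤ n * δ := by gcongr
      _ ≤ _ := hδ
  have hcompl := probReal_compl_eq_one_sub (μ := μ)
    (Finset.measurableSet_biUnion α fun a _ => measurableSet_closedBall (x := a) (ε := ρ))
  have hmono := measureReal_mono (μ := μ) hfar
  have hρr := Real.rpow_pos_of_pos hρ r
  refine le_trans ?_ hmarkov
  nlinarith

theorem lower_quantization_coefficient_positive (cc : CookieCutter) (Q : ℝ → ℝ)
    (hQ : ∀ t : ℝ, Filter.Tendsto
      (fun k : ℕ => (1 / (k : ℝ)) * Real.log
        (∑ σ : Fin k → Fin cc.N, cc.φnorm (List.ofFn σ) ^ t))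
      Filter.atTop (nhds (Q t)))
    (h : ℝ) (hh0 : 0 < h) (hQh : Q h = 0)
    (μ : MeasureTheory.Measure ℝ) (hμ : cc.IsGibbsLike μ h) (r : ℝ) (hr : 0 < r)
    (κ : ℝ) (hκ : 0 < κ)
    (hκlim : Filter.Tendsto
      (fun n : ℕ => (1 / (n : ℝ)) * Real.log
        (∑ σ : Fin n → Fin cc.N,
          ((μ (cc.Jc (List.ofFn σ))).toReal * cc.φnorm (List.ofFn σ) ^ r) ^ (κ / (r + κ))))
      Filter.atTop (nhds 0)) :
    ∃ C : ℝ, 0 < C ∧ ∀ᶠ n : ℕ in Filter.atTop, C ≤ (n : ℝ) * Vnr μ n r ^ (κ / r) := by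
  obtain ⟨C, hC, hball⟩ := hμ.exists_measureReal_closedBall_le hh0
  have hprob := hμ.1
  have hκh : κ ≤ h := hμ.quantizationDim_le hh0 (hQh ▸ hQ h) hr hκ hκlim
  have hsupp : ∀ᵐ x ∂μ, x ∈ Set.Icc (0:ℝ) 1 :=
    measure_mono_null (Set.compl_subset_compl.2 cc.E_subset_Icc) hμ.2.1
  refine ⟨(2 * C)⁻¹ * (1 / 2) ^ (κ / r), by positivity, ?_⟩
  filter_upwards [eventually_gt_atTop 0, tendsto_natCast_atTop_atTop.eventually_gt_atTop
    ((2 * C)⁻¹)] with n hn hnC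
  have hn0 : (0:ℝ) < n := by exact_mod_cast hn
  have hx0 : 0 < (2 * C * n)⁻¹ := by positivity
  have hx1 : (2 * C * n)⁻¹ < 1 := by
    refine inv_lt_one_of_one_lt₀ ?_
    rw [inv_lt_iff_one_lt_mul₀ (by positivity)] at hnC
    linarith
  set ρ := (2 * C * n)⁻¹ ^ h⁻¹ with hρdef
  have hρ0 : 0 < ρ := Real.rpow_pos_of_pos hx0 _
  have hρ1 : ρ < 1 := Real.rpow_lt_one hx0.le hx1 (inv_pos.2 hh0)
  have hρh : ρ ^ h = (2 * C * n)⁻¹ := Real.rpow_inv_rpow hx0.le hh0.ne'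
  have hV := half_rpow_le_Vnr isCompact_Icc hsupp hr hρ0 hn (fun x => hball x ρ hρ0 hρ1)
    (le_of_eq (by rw [hρh]; field_simp))
  calc (2 * C)⁻¹ * (1 / 2) ^ (κ / r) = n * (ρ ^ h * (1 / 2) ^ (κ / r)) := by
        rw [hρh]
        field_simp
    _ ≤ n * (ρ ^ κ * (1 / 2) ^ (κ / r)) := by
        gcongr n * (?_ * _)
        exact Real.rpow_le_rpow_of_exponent_ge hρ0 hρ1.le hκh
    _ = n * (ρ ^ r / 2) ^ (κ / r) := by
        rw [div_eq_mul_one_div (ρ ^ r), Real.mul_rpow (by positivity) (by positivity),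
          ← Real.rpow_mul hρ0.le, mul_div_cancel₀ _ hr.ne']
    _ ≤ n * Vnr μ n r ^ (κ / r) := by gcongr
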